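/- Let K and L be distributive lattices with L having a least element 0, let f : K → L be a lattice homomorphism, and let a₁, a₂, b ∈ K. If the pair (f(a₁), f(a₂)) is consonant in L (i.e., there exist u, v ∈ L with f(a₁) ∨ f(a₂) = f(a₁) ∨ v = u ∨ f(a₂) and u ∧ v = 0) and f is closed at both (a₁,b) and (a₂,b), then f is closed at (a₁ ∧ a₂, b). -/

import Mathlib

/-!
Consonance of `(f a₁, f a₂)` splits an inequality `f a₁ ⊓ f a₂ ≤ f b ⊔ x` into
`f a₁ ≤ f b ⊔ (x ⊔ u)` and `f a₂ ≤ f b ⊔ (x ⊔ v)` with `u ⊓ v = ⊥`. Closedness lifts each half to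
`K`, and the meet of the two lifts works because `(x ⊔ u) ⊓ (x ⊔ v) = x ⊔ u ⊓ v = x`.
-/

/-- A lattice homomorphism `f` is *closed at* `(a, b)` if for every `x` with
`f a ≤ f b ⊔ x` there is `u` with `a ≤ b ⊔ u` and `f u ≤ x`. -/
def ClosedAt {K L : Type*} [Lattice K] [Lattice L] (f : LatticeHom K L) (a b : K) : Prop :=
  ∀ x : L, f a ≤ f b ⊔ x → ∃ u : K, a ≤ b ⊔ u ∧ f u ≤ x

/-- A pair `(a, b)` in a lattice with bottom is *consonant* if it admits a splitting pair. -/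
def Consonant {L : Type*} [Lattice L] [OrderBot L] (a b : L) : Prop :=
  ∃ u v : L, a ⊔ b = a ⊔ v ∧ a ⊔ b = u ⊔ b ∧ u ⊓ v = ⊥

theorem le_sup_of_inf_le_of_le_sup {L : Type*} [DistribLattice L] {a b c u : L}
    (hab : a ⊓ b ≤ c) (ha : a ≤ u ⊔ b) : a ≤ c ⊔ u :=
  calc
    a ≤ a ⊓ (u ⊔ b) := le_inf le_rfl ha
    _ = a ⊓ b ⊔ a ⊓ u := by rw [inf_sup_left, sup_comm]
    _ ≤ c ⊔ u := sup_le_sup hab inf_le_right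

theorem Consonant.exists_le_sup_of_inf_le {L : Type*} [DistribLattice L] [OrderBot L]
    {a b c : L} (h : Consonant a b) (hab : a ⊓ b ≤ c) :
    ∃ u v : L, a ≤ c ⊔ u ∧ b ≤ c ⊔ v ∧ u ⊓ v = ⊥ := by
  obtain ⟨u, v, hv, hu, huv⟩ := h
  have ha : a ≤ u ⊔ b := le_sup_left.trans_eq hu
  have hb : b ≤ v ⊔ a := le_sup_right.trans_eq (hv.trans (sup_comm a v))
  have hba : b ⊓ a ≤ c := (inf_comm b a).trans_le hab
  exact ⟨u, v, le_sup_of_inf_le_of_le_sup hab ha, le_sup_of_inf_le_of_le_sup hba hb, huv⟩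

theorem ClosedAt.exists_inf_le_sup_and_map_le_inf {K L : Type*} [DistribLattice K] [Lattice L]
    {f : LatticeHom K L} {a₁ a₂ b : K} {x₁ x₂ : L}
    (h₁ : ClosedAt f a₁ b) (h₂ : ClosedAt f a₂ b)
    (hx₁ : f a₁ ≤ f b ⊔ x₁) (hx₂ : f a₂ ≤ f b ⊔ x₂) :
    ∃ w : K, a₁ ⊓ a₂ ≤ b ⊔ w ∧ f w ≤ x₁ ⊓ x₂ := by
  obtain ⟨w₁, hw₁, hfw₁⟩ := h₁ x₁ hx₁
  obtain ⟨w₂, hw₂, hfw₂⟩ := h₂ x₂ hx₂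
  refine ⟨w₁ ⊓ w₂, ?_, ?_⟩
  · exact (inf_le_inf hw₁ hw₂).trans_eq (sup_inf_left b w₁ w₂).symm
  · exact (map_inf f w₁ w₂).trans_le (inf_le_inf hfw₁ hfw₂)

theorem closedAt_inf_left {K L : Type*} [DistribLattice K] [DistribLattice L] [OrderBot L]
    (f : LatticeHom K L) (a₁ a₂ b : K)
    (hcons : Consonant (f a₁) (f a₂))
    (h₁ : ClosedAt f a₁ b) (h₂ : ClosedAt f a₂ b) :
    ClosedAt f (a₁ ⊓ a₂) b := by
  intro x hx
  rw [map_inf] at hx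
  obtain ⟨u, v, hu, hv, huv⟩ := hcons.exists_le_sup_of_inf_le hx
  rw [sup_assoc] at hu hv
  obtain ⟨w, hw, hfw⟩ := h₁.exists_inf_le_sup_and_map_le_inf h₂ hu hv
  have hmeet : (x ⊔ u) ⊓ (x ⊔ v) = x := by rw [← sup_inf_left, huv, sup_bot_eq]
  exact ⟨w, hw, hfw.trans_eq hmeet⟩
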